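/- Let E be the Hilbert space of all functions ξ : ℕ → ℂ with ‖ξ‖² := Σ_{n∈ℕ} |ξ(n)|²·(1+n²)⁻¹ < ∞. There do not exist: a complex Hilbert space H; a family T : ℕ → ℕ → (bounded operators on H) satisfying the matrix-unit relations T(n,m) ∘ T(k,l) = T(n,l) if m = k and = 0 if m ≠ k, and (T(n,m))* = T(m,n) (adjoint); and an injective continuous linear map j : E → H such that for all n, m ∈ ℕ and ξ ∈ E, j(e_{nm}·ξ) = T(n,m)(j(ξ)), where e_{nm}·ξ ∈ E is the function whose value at n is ξ(m) and whose value elsewhere is 0. -/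

import Mathlib

/-!
The indicators `δ_n` satisfy `δ_n = e_{n0} δ_0`, so `j δ_n = T(n,0) (j δ_0)` with
`j δ_0 = T(0,0) (j δ_0)`. As `T(n,0)* T(n,0) = T(0,n) T(n,0) = T(0,0)`, all the vectors `j δ_n`
have the same norm, which is nonzero by injectivity. But `‖δ_n‖² = (1 + n²)⁻¹ → 0` in `E`, so
`j δ_n → 0` by continuity, a contradiction.

Thus equality of the norms of the `j δ_n` already suffices; neither their orthogonality nor the
membership of the constant function `1` in `E` is needed.
-/

open MeasureTheory
open scoped ENNReal

/-- The weighted counting measure on `ℕ` giving the point `n` mass `(1 + n²)⁻¹`, so that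
`L²` of this measure is the weighted space `E = ℓ²(ℕ, (1+n²)⁻¹)` of Example 2.2. -/
noncomputable def weightedCountingMeasure : Measure ℕ :=
  Measure.sum fun n : ℕ => ((1 + (n : ℝ≥0∞) ^ 2)⁻¹) • Measure.dirac n

lemma weightedCountingMeasure_singleton (n : ℕ) :
    weightedCountingMeasure {n} = (1 + (n : ℝ≥0∞) ^ 2)⁻¹ := by
  rw [weightedCountingMeasure, Measure.sum_apply _ (measurableSet_singleton n),
    tsum_eq_single n]
  · simp
  · intro m hm
    simp [hm]

lemma weightedCountingMeasure_singleton_ne_top (n : ℕ) :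
    weightedCountingMeasure {n} ≠ ⊤ := by
  simp [weightedCountingMeasure_singleton]

lemma weightedCountingMeasure_singleton_ne_zero (n : ℕ) :
    weightedCountingMeasure {n} ≠ 0 := by
  rw [weightedCountingMeasure_singleton]
  exact ENNReal.inv_ne_zero.2 (by finiteness)

/-- The indicator `δ_n` of the point `n`, as an element of `E`. -/
noncomputable def pointIndicator (n : ℕ) : Lp ℂ 2 weightedCountingMeasure :=
  indicatorConstLp 2 (measurableSet_singleton n) (weightedCountingMeasure_singleton_ne_top n) 1

/-- Since every point has positive mass, the chosen representative of `δ_n` is the indicator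
function everywhere and not just almost everywhere. -/
lemma pointIndicator_apply (n k : ℕ) :
    (pointIndicator n : ℕ → ℂ) k = if k = n then 1 else 0 := by
  have h : (pointIndicator n : ℕ → ℂ) =ᵐ[weightedCountingMeasure] _ :=
    indicatorConstLp_coeFn
  have hk : (pointIndicator n : ℕ → ℂ) k = ({n} : Set ℕ).indicator (fun _ => (1 : ℂ)) k := by
    by_contra hne
    exact weightedCountingMeasure_singleton_ne_zero k
      (measure_mono_null (Set.singleton_subset_iff.2 hne) (ae_iff.1 h))
  rw [hk, Set.indicator_apply]
  simp

lemma norm_pointIndicator_sq (n : ℕ) :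
    ‖pointIndicator n‖ ^ 2 = (1 + (n : ℝ) ^ 2)⁻¹ := by
  have hreal : weightedCountingMeasure.real {n} = (1 + (n : ℝ) ^ 2)⁻¹ := by
    rw [measureReal_def, weightedCountingMeasure_singleton, ENNReal.toReal_inv,
      ENNReal.toReal_add (by finiteness) (by finiteness)]
    simp
  rw [pointIndicator, norm_indicatorConstLp (by simp) (by simp), hreal, norm_one, one_mul,
    ← Real.rpow_natCast, ← Real.rpow_mul (by positivity)]
  simp

lemma tendsto_pointIndicator :
    Filter.Tendsto pointIndicator Filter.atTop (nhds 0) := by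
  have hsq : Filter.Tendsto (fun n => ‖pointIndicator n‖ ^ 2) Filter.atTop (nhds 0) := by
    simp_rw [norm_pointIndicator_sq]
    refine Filter.Tendsto.inv_tendsto_atTop (Filter.tendsto_atTop_add_const_left _ _ ?_)
    exact (Filter.tendsto_pow_atTop two_ne_zero).comp tendsto_natCast_atTop_atTop
  rw [tendsto_zero_iff_norm_tendsto_zero]
  simpa using hsq.sqrt

/-- (Non-extension result for Example 2.2.)  The topologically
irreducible module `E = ℓ²(ℕ, (1+n²)⁻¹)` over the smooth compact operators `K^∞` is
contained in no star-representation of the compact operators: there is no Hilbert space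
`H` with a system of matrix units `T(n,m)` and an injective continuous linear
`j : E → H` intertwining the matrix-unit actions. -/
theorem no_extension_of_weighted_l2_module
    (H : Type) [NormedAddCommGroup H] [InnerProductSpace ℂ H] [CompleteSpace H]
    (T : ℕ → ℕ → (H →L[ℂ] H))
    (hT_mul : ∀ n m k l : ℕ, T n m * T k l = if m = k then T n l else 0)
    (hT_star : ∀ n m : ℕ, star (T n m) = T m n)
    (j : Lp ℂ 2 weightedCountingMeasure →L[ℂ] H)
    (hj_inj : Function.Injective j)
    (hj : ∀ (n m : ℕ) (ξ ψ : Lp ℂ 2 weightedCountingMeasure),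
      (ψ : ℕ → ℂ) =ᵐ[weightedCountingMeasure]
          (fun k => if k = n then (ξ : ℕ → ℂ) m else 0) →
        j ψ = T n m (j ξ)) :
    False := by
  have hunit : ∀ n, j (pointIndicator n) = T n 0 (j (pointIndicator 0)) := by
    intro n
    refine hj n 0 _ _ (Filter.Eventually.of_forall fun k => ?_)
    simp [pointIndicator_apply]
  have hnorm : ∀ n, ‖j (pointIndicator n)‖ = ‖j (pointIndicator 0)‖ := by
    intro n
    have hinner : inner ℂ (j (pointIndicator n)) (j (pointIndicator n)) =
        inner ℂ (j (pointIndicator 0)) (j (pointIndicator 0)) := by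
      have hTT : T 0 n (T n 0 (j (pointIndicator 0))) = j (pointIndicator 0) := by
        rw [← mul_apply_eq_comp, hT_mul, if_pos rfl, ← hunit 0]
      rw [hunit n, ← ContinuousLinearMap.adjoint_inner_left, ← ContinuousLinearMap.star_eq_adjoint,
        hT_star, hTT]
    rw [norm_eq_sqrt_re_inner (𝕜 := ℂ), hinner, ← norm_eq_sqrt_re_inner]
  have hlim : Filter.Tendsto (fun n => ‖j (pointIndicator n)‖) Filter.atTop (nhds 0) := by
    simpa using ((j.continuous.tendsto 0).comp tendsto_pointIndicator).norm
  simp_rw [hnorm] at hlim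
  have hzero : j (pointIndicator 0) = 0 :=
    norm_eq_zero.1 (tendsto_nhds_unique tendsto_const_nhds hlim)
  have h0 : pointIndicator 0 = 0 := hj_inj (by rw [hzero, map_zero])
  have := norm_pointIndicator_sq 0
  simp [h0] at this
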